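/- arXiv:1810.08952 — 4 statements merged into one kernel-verified Lean document; each statement's English description precedes it below -/
import Mathlib

section
/- Let n ≥ 1, 0 < α < n, and 1 ≤ p₂ < p₁ < ∞. For any γ with α/p₁ < γ < min{ α/p₂ , n/p₁ }, the function f(y) := |y|^{−γ} belongs to S_{p₂,α}(ℝ^n) but not to S_{p₁,α}(ℝ^n); in particular the inclusion S_{p₁,α} ⊆ S_{p₂,α} is proper. -/
/-!
Let `α ≤ n` and `f y = g ‖y‖` with `g ≥ 0` decreasing. At each point of `B(x, r)` one of the two
distances `‖y‖`, `|x - y|` is the smaller, and putting it in place of the larger one can only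
increase `|f y| ^ p / |x - y| ^ (n - α)`, a product of decreasing functions of the two distances.
Hence every Stummel integral over a ball of radius `r` is at most twice the one centred at the
origin, and `f ∈ L^p_loc` lies in the Stummel class as soon as the central integrals are finite:
their decay as `r → 0` is automatic. For `f y = ‖y‖ ^ (-γ)` the central integrand is
`‖y‖ ^ (α - n - γ * p)`, which in polar coordinates is integrable near the origin exactly when
`γ * p < α`.
-/

open MeasureTheory Metric Filter Set ENNReal

noncomputable section

/-- Euclidean space ℝ^n. -/
abbrev Euc (n : ℕ) := EuclideanSpace ℝ (Fin n)

/-- Stummel p-modulus with general weight Ψ: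
`η_{p,Ψ}f(r) = sup_x ( ∫_{|x-y|<r} |f(y)|^p Ψ(|x-y|)/|x-y|^n dy )^{1/p}`. -/
noncomputable def stummelMod (n : ℕ) (p : ℝ) (Ψ : ℝ → ℝ) (f : Euc n → ℝ) (r : ℝ) : ℝ≥0∞ :=
  ⨆ x : Euc n,
    (∫⁻ y in ball x r,
        ENNReal.ofReal (|f y| ^ p * Ψ (dist x y) / dist x y ^ (n : ℝ))) ^ (1 / p)

/-- Stummel p-modulus with power weight Ψ(t) = t^α:
`η_{p,α}f(r) = sup_x ( ∫_{|x-y|<r} |f(y)|^p / |x-y|^{n-α} dy )^{1/p}`. -/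
noncomputable def stummelModA (n : ℕ) (p α : ℝ) (f : Euc n → ℝ) (r : ℝ) : ℝ≥0∞ :=
  ⨆ x : Euc n,
    (∫⁻ y in ball x r,
        ENNReal.ofReal (|f y| ^ p / dist x y ^ ((n : ℝ) - α))) ^ (1 / p)

/-- f ∈ L^p_loc(ℝ^n). -/
def MemLocLp (n : ℕ) (p : ℝ) (f : Euc n → ℝ) : Prop :=
  LocallyIntegrable (fun y => |f y| ^ p) volume

/-- The generalized Stummel p-class `S_{p,Ψ}`. -/
def MemStummel (n : ℕ) (p : ℝ) (Ψ : ℝ → ℝ) (f : Euc n → ℝ) : Prop :=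
  MemLocLp n p f ∧ (∀ r > 0, stummelMod n p Ψ f r < ⊤) ∧
    Tendsto (stummelMod n p Ψ f) (nhdsWithin 0 (Ioi 0)) (nhds 0)

/-- The Stummel p-class `S_{p,α}` (power weight). -/
def MemStummelA (n : ℕ) (p α : ℝ) (f : Euc n → ℝ) : Prop :=
  MemLocLp n p f ∧ (∀ r > 0, stummelModA n p α f r < ⊤) ∧
    Tendsto (stummelModA n p α f) (nhdsWithin 0 (Ioi 0)) (nhds 0)

/-- The bounded Stummel modulus class `S̃_{p,α}`. -/
def MemStummelBddA (n : ℕ) (p α : ℝ) (f : Euc n → ℝ) : Prop :=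
  MemLocLp n p f ∧ ∀ r > 0, stummelModA n p α f r < ⊤

/-- Generalized Morrey norm `‖f‖_{L^{p,Ψ}}`. -/
noncomputable def morreyNorm (n : ℕ) (p : ℝ) (Ψ : ℝ → ℝ) (f : Euc n → ℝ) : ℝ≥0∞ :=
  ⨆ (x : Euc n) (r : ℝ) (_ : 0 < r),
    (volume (ball x r))⁻¹ ^ (1 / p) * ENNReal.ofReal (Ψ r)⁻¹ *
      (∫⁻ y in ball x r, ENNReal.ofReal (|f y| ^ p)) ^ (1 / p)

/-- The generalized Morrey space `L^{p,Ψ}`. -/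
def MemMorrey (n : ℕ) (p : ℝ) (Ψ : ℝ → ℝ) (f : Euc n → ℝ) : Prop :=
  MemLocLp n p f ∧ morreyNorm n p Ψ f < ⊤

/-- Classical Morrey norm `‖f‖_{L^{p,λ}}`. -/
noncomputable def morreyNormC (n : ℕ) (p lam : ℝ) (f : Euc n → ℝ) : ℝ≥0∞ :=
  ⨆ (x : Euc n) (r : ℝ) (_ : 0 < r),
    ENNReal.ofReal (r ^ (-(lam / p))) *
      (∫⁻ y in ball x r, ENNReal.ofReal (|f y| ^ p)) ^ (1 / p)

/-- The classical Morrey space `L^{p,λ}`. -/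
def MemMorreyC (n : ℕ) (p lam : ℝ) (f : Euc n → ℝ) : Prop :=
  MemLocLp n p f ∧ morreyNormC n p lam f < ⊤

/-- Generalized weak Morrey norm `‖f‖_{wL^{p,Ψ}}`. -/
noncomputable def weakMorreyNorm (n : ℕ) (p : ℝ) (Ψ : ℝ → ℝ) (f : Euc n → ℝ) : ℝ≥0∞ :=
  ⨆ (x : Euc n) (r : ℝ) (_ : 0 < r) (t : ℝ) (_ : 0 < t),
    ENNReal.ofReal t * (volume {y ∈ ball x r | t < |f y|}) ^ (1 / p) /
      (ENNReal.ofReal (Ψ r) * (volume (ball x r)) ^ (1 / p))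

/-- The generalized weak Morrey space `wL^{p,Ψ}`. -/
def MemWeakMorrey (n : ℕ) (p : ℝ) (Ψ : ℝ → ℝ) (f : Euc n → ℝ) : Prop :=
  Measurable f ∧ weakMorreyNorm n p Ψ f < ⊤

/-- Classical weak Morrey norm `‖f‖_{wL^{p,λ}}`. -/
noncomputable def weakMorreyNormC (n : ℕ) (p lam : ℝ) (f : Euc n → ℝ) : ℝ≥0∞ :=
  ⨆ (x : Euc n) (r : ℝ) (_ : 0 < r) (t : ℝ) (_ : 0 < t),
    ENNReal.ofReal (r ^ (-(lam / p))) * ENNReal.ofReal t *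
      (volume {y ∈ ball x r | t < |f y|}) ^ (1 / p)

/-- The classical weak Morrey space `wL^{p,λ}`. -/
def MemWeakMorreyC (n : ℕ) (p lam : ℝ) (f : Euc n → ℝ) : Prop :=
  Measurable f ∧ weakMorreyNormC n p lam f < ⊤

/-- Decreasing rearrangement `f*(t) = inf{σ > 0 : |{|f| > σ}| ≤ t}`. -/
noncomputable def rearrangement (n : ℕ) (f : Euc n → ℝ) (t : ℝ) : ℝ :=
  sInf {σ : ℝ | 0 < σ ∧ volume {x : Euc n | σ < |f x|} ≤ ENNReal.ofReal t}

/-- Lorentz norm `‖f‖_{L^p_κ} = ( ∫₀^∞ (t^{1/κ} f*(t))^p dt/t )^{1/p}`. -/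
noncomputable def lorentzNorm (n : ℕ) (kappa p : ℝ) (f : Euc n → ℝ) : ℝ≥0∞ :=
  (∫⁻ t in Ioi (0 : ℝ),
      ENNReal.ofReal ((t ^ (1 / kappa) * rearrangement n f t) ^ p / t)) ^ (1 / p)

/-- The Lorentz space `L^p_κ`. -/
def MemLorentz (n : ℕ) (kappa p : ℝ) (f : Euc n → ℝ) : Prop :=
  Measurable f ∧ lorentzNorm n kappa p f < ⊤

end

section AddHaar

variable {E : Type*} [NormedAddCommGroup E] [NormedSpace ℝ E] [FiniteDimensional ℝ E]
  [Nontrivial E] [MeasurableSpace E] [BorelSpace E] (μ : Measure E) [μ.IsAddHaarMeasure]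

lemma integrableOn_ball_norm_rpow_iff {s r : ℝ} (hr : 0 < r) :
    IntegrableOn (fun y : E => ‖y‖ ^ s) (ball 0 r) μ ↔ -(Module.finrank ℝ E : ℝ) < s := by
  have hdim : 1 ≤ Module.finrank ℝ E := Module.finrank_pos
  have jacobian_mul : EqOn (fun t : ℝ => t ^ (Module.finrank ℝ E - 1) • t ^ s)
      (fun t => t ^ ((Module.finrank ℝ E : ℝ) - 1 + s)) (Ioo 0 r) := fun t ht => by
    simp only [smul_eq_mul]
    rw [← Real.rpow_natCast, ← Real.rpow_add ht.1, Nat.cast_sub hdim, Nat.cast_one]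
  rw [integrableOn_fun_norm_addHaar μ (f := fun t : ℝ => t ^ s),
    integrableOn_congr_fun jacobian_mul measurableSet_Ioo,
    intervalIntegral.integrableOn_Ioo_rpow_iff hr]
  constructor <;> intro h <;> linarith

lemma setLIntegral_ball_norm_rpow_lt_top_iff {s r : ℝ} (hr : 0 < r) :
    ∫⁻ y in ball (0 : E) r, ENNReal.ofReal (‖y‖ ^ s) ∂μ < ⊤ ↔
      -(Module.finrank ℝ E : ℝ) < s := by
  rw [lt_top_iff_ne_top, lintegral_ofReal_ne_top_iff_integrable
    (measurable_norm.pow_const s).aestronglyMeasurable (ae_of_all _ fun _ => by positivity)]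
  exact integrableOn_ball_norm_rpow_iff μ hr

end AddHaar

lemma tendsto_setLIntegral_ball_nhdsGT_zero {X : Type*} [MetricSpace X] [MeasurableSpace X]
    [OpensMeasurableSpace X] {μ : Measure X} {f : X → ℝ≥0∞} {x : X} (hx : μ {x} = 0)
    (hf : ∃ r > 0, ∫⁻ y in ball x r, f y ∂μ ≠ ⊤) :
    Tendsto (fun r => ∫⁻ y in ball x r, f y ∂μ) (nhdsWithin 0 (Ioi 0)) (nhds 0) := by
  have hlim := tendsto_measure_biInter_gt (μ := μ.withDensity f) (s := ball x) (a := 0)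
    (fun _ _ => measurableSet_ball.nullMeasurableSet) (fun _ _ _ h => ball_subset_ball h)
    (by simpa only [withDensity_apply f measurableSet_ball] using hf)
  rw [biInter_gt_ball, closedBall_zero, withDensity_absolutelyContinuous μ f hx] at hlim
  exact hlim.congr fun r => withDensity_apply f measurableSet_ball

lemma setLIntegral_ball_mul_le_of_antitoneOn {E : Type*} [NormedAddCommGroup E]
    [MeasurableSpace E] [BorelSpace E] {μ : Measure E} [μ.IsAddRightInvariant]
    [NullSingletonClass μ] {φ ψ : ℝ → ℝ≥0∞} (hφ : AntitoneOn φ (Ioi 0))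
    (hψ : AntitoneOn ψ (Ioi 0)) (x : E) (r : ℝ) :
    ∫⁻ y in ball x r, φ ‖y‖ * ψ (dist x y) ∂μ ≤
      2 * ∫⁻ y in ball 0 r, φ ‖y‖ * ψ ‖y‖ ∂μ := by
  let nearOrigin : Set E := {y | ‖y‖ ≤ dist x y}
  have hnear : MeasurableSet nearOrigin := measurableSet_le (by fun_prop) (by fun_prop)
  have near_le : ∫⁻ y in ball x r ∩ nearOrigin, φ ‖y‖ * ψ (dist x y) ∂μ ≤
      ∫⁻ y in ball 0 r, φ ‖y‖ * ψ ‖y‖ ∂μ := by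
    refine (setLIntegral_mono_ae' (measurableSet_ball.inter hnear) ?_).trans
      (lintegral_mono_set (t := ball 0 r) fun y hy => ?_)
    · filter_upwards [Measure.ae_ne μ 0] with y hy₀ hy
      have hy₀ : 0 < ‖y‖ := norm_pos_iff.2 hy₀
      gcongr
      exact hψ hy₀ (hy₀.trans_le hy.2) hy.2
    · exact mem_ball_zero_iff.2 (hy.2.trans_lt (mem_ball'.1 hy.1))
  have far_le : ∫⁻ y in ball x r \ nearOrigin, φ ‖y‖ * ψ (dist x y) ∂μ ≤
      ∫⁻ y in ball 0 r, φ ‖y‖ * ψ ‖y‖ ∂μ := calc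
    _ ≤ ∫⁻ y in ball x r \ nearOrigin, φ ‖y - x‖ * ψ ‖y - x‖ ∂μ := by
      refine setLIntegral_mono_ae' (measurableSet_ball.diff hnear) ?_
      filter_upwards [Measure.ae_ne μ x] with y hyx hy
      have hlt : ‖y - x‖ < ‖y‖ := by simpa [nearOrigin, dist_eq_norm_sub'] using hy.2
      have hyx : 0 < ‖y - x‖ := norm_pos_iff.2 (sub_ne_zero.2 hyx)
      rw [dist_eq_norm_sub']
      gcongr
      exact hφ hyx (hyx.trans hlt) hlt.le
    _ ≤ ∫⁻ y in ball x r, φ ‖y - x‖ * ψ ‖y - x‖ ∂μ := lintegral_mono_set sdiff_subset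
    _ = ∫⁻ y in ball 0 r, φ ‖y‖ * ψ ‖y‖ ∂μ := by
      have hball : ball x r = (· - x) ⁻¹' ball 0 r := by ext; simp [dist_eq_norm]
      rw [hball]
      exact (measurePreserving_sub_right μ x).setLIntegral_comp_preimage_emb
        (measurableEmbedding_subRight x) (fun y => φ ‖y‖ * ψ ‖y‖) _
  rw [← lintegral_inter_add_sdiff _ _ hnear, two_mul]
  exact add_le_add near_le far_le

lemma abs_norm_rpow_neg_rpow {E : Type*} [SeminormedAddGroup E] (γ p : ℝ) (y : E) :
    |‖y‖ ^ (-γ)| ^ p = ‖y‖ ^ (-(γ * p)) := by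
  rw [abs_of_nonneg (by positivity), ← Real.rpow_mul (norm_nonneg y), neg_mul]

section Stummel

/-- The Stummel integral of `f` over the ball `B(x, r)`; `stummelModA` is the supremum over the
centres `x` of its `1 / p`-th power. -/
noncomputable def stummelInt (n : ℕ) (p α : ℝ) (f : Euc n → ℝ) (x : Euc n) (r : ℝ) : ℝ≥0∞ :=
  ∫⁻ y in ball x r, ENNReal.ofReal (|f y| ^ p / dist x y ^ ((n : ℝ) - α))

variable {n : ℕ} {p α : ℝ}

lemma stummelInt_lt_top_of_stummelModA_lt_top (hp : 0 < p) {f : Euc n → ℝ} {r : ℝ}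
    (h : stummelModA n p α f r < ⊤) (x : Euc n) : stummelInt n p α f x r < ⊤ :=
  (ENNReal.rpow_lt_top_iff_of_pos (one_div_pos.2 hp)).1 <|
    (le_iSup (fun x => stummelInt n p α f x r ^ (1 / p)) x).trans_lt h

variable [NeZero n]

lemma stummelInt_comp_norm_le (hp : 0 ≤ p) (hα : α ≤ n) {g : ℝ → ℝ}
    (hg₀ : ∀ t > 0, 0 ≤ g t) (hg : AntitoneOn g (Ioi 0)) (x : Euc n) (r : ℝ) :
    stummelInt n p α (fun y => g ‖y‖) x r ≤ 2 * stummelInt n p α (fun y => g ‖y‖) 0 r := by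
  have antitone_g : AntitoneOn (fun t => ENNReal.ofReal (|g t| ^ p)) (Ioi 0) :=
    fun s hs t ht hst => by
      simp only [abs_of_nonneg (hg₀ s hs), abs_of_nonneg (hg₀ t ht)]
      exact ENNReal.ofReal_le_ofReal (Real.rpow_le_rpow (hg₀ t ht) (hg hs ht hst) hp)
  have antitone_weight : AntitoneOn (fun t => ENNReal.ofReal (t ^ ((n : ℝ) - α))⁻¹) (Ioi 0) :=
    fun s hs t _ hst => ENNReal.ofReal_le_ofReal <|
      inv_anti₀ (Real.rpow_pos_of_pos hs _)
        (Real.rpow_le_rpow (le_of_lt hs) hst (sub_nonneg.2 hα))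
  simpa only [stummelInt, div_eq_mul_inv, dist_zero_left,
    ENNReal.ofReal_mul (Real.rpow_nonneg (abs_nonneg _) p)] using
    setLIntegral_ball_mul_le_of_antitoneOn (μ := volume) antitone_g antitone_weight x r

theorem memStummelA_comp_norm_iff (hp : 0 < p) (hα : α ≤ n) {g : ℝ → ℝ}
    (hg₀ : ∀ t > 0, 0 ≤ g t) (hg : AntitoneOn g (Ioi 0)) :
    MemStummelA n p α (fun y => g ‖y‖) ↔
      MemLocLp n p (fun y => g ‖y‖) ∧ ∀ r > 0, stummelInt n p α (fun y => g ‖y‖) 0 r < ⊤ := by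
  have hp' : 0 < 1 / p := one_div_pos.2 hp
  refine ⟨fun ⟨hloc, hfin, _⟩ =>
    ⟨hloc, fun r hr => stummelInt_lt_top_of_stummelModA_lt_top hp (hfin r hr) 0⟩, ?_⟩
  rintro ⟨hloc, hfin⟩
  have modulus_le : ∀ r, stummelModA n p α (fun y => g ‖y‖) r ≤
      (2 * stummelInt n p α (fun y => g ‖y‖) 0 r) ^ (1 / p) := fun r =>
    iSup_le fun x => ENNReal.rpow_le_rpow (stummelInt_comp_norm_le hp.le hα hg₀ hg x r) hp'.le
  refine ⟨hloc, fun r hr => (modulus_le r).trans_lt ?_, ?_⟩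
  · exact ENNReal.rpow_lt_top_of_nonneg hp'.le
      (ENNReal.mul_ne_top (by simp) (hfin r hr).ne)
  · have hlim : Tendsto (stummelInt n p α (fun y => g ‖y‖) 0) (nhdsWithin 0 (Ioi 0)) (nhds 0) :=
      tendsto_setLIntegral_ball_nhdsGT_zero (measure_singleton _) ⟨1, one_pos, (hfin 1 one_pos).ne⟩
    have hbound := ENNReal.Tendsto.const_mul (a := 2) hlim (.inr ENNReal.ofNat_ne_top)
    replace hbound := hbound.ennrpow_const (1 / p)
    rw [mul_zero, ENNReal.zero_rpow_of_pos hp'] at hbound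
    exact tendsto_of_tendsto_of_tendsto_of_le_of_le tendsto_const_nhds hbound
      (fun _ => zero_le) modulus_le

lemma memLocLp_norm_rpow_neg {γ : ℝ} (h : γ * p < n) :
    MemLocLp n p (fun y => ‖y‖ ^ (-γ)) := by
  simp only [MemLocLp, abs_norm_rpow_neg_rpow]
  refine locallyIntegrable_of_norm_le_rpow (C := 1) (α := γ * p) ?_ ?_ (ae_of_all _ fun y => ?_)
    (measurable_norm.pow_const _).aestronglyMeasurable
  · simpa using NeZero.one_le
  · simpa using h
  · rw [one_mul, Real.norm_of_nonneg (by positivity)]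

lemma stummelInt_norm_rpow_neg_lt_top_iff {γ r : ℝ} (hr : 0 < r) :
    stummelInt n p α (fun y => ‖y‖ ^ (-γ)) 0 r < ⊤ ↔ γ * p < α := by
  have integrand_eq : ∀ᵐ y : Euc n, |‖y‖ ^ (-γ)| ^ p / dist 0 y ^ ((n : ℝ) - α) =
      ‖y‖ ^ (α - n - γ * p) := by
    filter_upwards [Measure.ae_ne volume 0] with y hy
    rw [abs_norm_rpow_neg_rpow, dist_zero_left, ← Real.rpow_sub (norm_pos_iff.2 hy)]
    ring_nf
  rw [stummelInt, lintegral_congr_ae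
    (ae_restrict_of_ae (integrand_eq.mono fun _ => congrArg ENNReal.ofReal)),
    setLIntegral_ball_norm_rpow_lt_top_iff volume hr, finrank_euclideanSpace_fin]
  constructor <;> intro h <;> linarith

theorem memStummelA_norm_rpow_neg_iff {γ : ℝ} (hp : 0 < p) (hα : α ≤ n) (hγ : 0 ≤ γ) :
    MemStummelA n p α (fun y => ‖y‖ ^ (-γ)) ↔ γ * p < α := by
  rw [memStummelA_comp_norm_iff hp hα (fun t ht => Real.rpow_nonneg (le_of_lt ht) (-γ))
    (Real.antitoneOn_rpow_Ioi_of_exponent_nonpos (neg_nonpos.2 hγ))]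
  refine ⟨fun h => (stummelInt_norm_rpow_neg_lt_top_iff one_pos).1 (h.2 1 one_pos), fun h => ?_⟩
  exact ⟨memLocLp_norm_rpow_neg (h.trans_le hα),
    fun _ hr => (stummelInt_norm_rpow_neg_lt_top_iff hr).2 h⟩

end Stummel

theorem stummel_alpha_p_inclusion_proper_general (n : ℕ) (α p₁ p₂ γ : ℝ)
    (hα : 0 < α) (hαn : α ≤ n) (hp₂ : 0 < p₂) (hp : p₂ < p₁)
    (hγ₁ : α / p₁ < γ) (hγ₂ : γ < α / p₂)
    (f : Euc n → ℝ) (hf : f = fun y => ‖y‖ ^ (-γ)) :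
    MemStummelA n p₂ α f ∧ ¬ MemStummelA n p₁ α f := by
  have : NeZero n := ⟨by rintro rfl; exact hαn.not_gt (by simpa using hα)⟩
  have hp₁ : 0 < p₁ := hp₂.trans hp
  have hγ : 0 ≤ γ := (div_pos hα hp₁).le.trans hγ₁.le
  rw [hf, memStummelA_norm_rpow_neg_iff hp₂ hαn hγ, memStummelA_norm_rpow_neg_iff hp₁ hαn hγ]
  exact ⟨(lt_div_iff₀ hp₂).1 hγ₂, ((div_lt_iff₀ hp₁).1 hγ₁).not_gt⟩

/-- For `1 ≤ p₂ < p₁ < ∞`, `0 < α < n` and `α/p₁ < γ < min{α/p₂, n/p₁}`, the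
function `f(y) = |y|^{-γ}` belongs to `S_{p₂,α}(ℝ^n)` but not to `S_{p₁,α}(ℝ^n)`;
hence the inclusion `S_{p₁,α} ⊆ S_{p₂,α}` is proper. -/
theorem stummel_alpha_p_inclusion_proper (n : ℕ) (hn : 1 ≤ n) (α p₁ p₂ γ : ℝ)
    (hα : 0 < α) (hαn : α < n) (hp₂ : 1 ≤ p₂) (hp : p₂ < p₁)
    (hγ₁ : α / p₁ < γ) (hγ₂ : γ < α / p₂) (hγ₃ : γ < n / p₁)
    (f : Euc n → ℝ) (hf : f = fun y => ‖y‖ ^ (-γ)) :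
    MemStummelA n p₂ α f ∧ ¬ MemStummelA n p₁ α f := by
  exact stummel_alpha_p_inclusion_proper_general n α p₁ p₂ γ hα hαn.le (one_pos.trans_le hp₂) hp
    hγ₁ hγ₂ f hf
end

section
/- Let n ≥ 1 and 1 ≤ p₂ ≤ p₁ < ∞. Suppose Ψ₁ : (0,∞) → (0,∞) satisfies Ψ₁(r)/r^n ≤ A Ψ₁(s)/s^n for all 0 < s ≤ r (for some A > 0). If f ∈ S_{p₁,Ψ₁}(ℝ^n) and there exist a measurable Ψ₂ : (0,∞) → (0,∞) and c > 0 such that η_{p₁,Ψ₁}f(r) ≤ c Ψ₁(r)^{1/p₁} Ψ₂(r) for every r > 0, then f ∈ L^{p₂,Ψ₂}(ℝ^n). -/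
/-!
Since `Ψ₁(t)/t^n` is almost decreasing, its values on `(0, r)` are at least `A⁻¹ Ψ₁(r)/r^n`. On a
ball `B = B(x, r)` the Stummel integral of `f` thus dominates `A⁻¹ Ψ₁(r) r^{-n} ∫_B |f|^{p₁}`, that
is, up to a constant, `Ψ₁(r)` times the average of `|f|^{p₁}` over `B`. The hypothesis on the
modulus then bounds the `L^{p₁}` mean of `f` over `B` by a multiple of `Ψ₂(r)`, and by Jensen's
inequality `L^p` means increase with `p`, so that `p₁` can be lowered to `p₂`.
-/

open MeasureTheory Metric Filter Set ENNReal

section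

variable {α : Type*} [MeasurableSpace α] {μ : Measure α}

lemma rpow_laverage_rpow_mono {g : α → ℝ≥0∞} (hg : AEMeasurable g μ) {q p : ℝ} (hq : 0 < q)
    (hqp : q ≤ p) :
    (⨍⁻ x, g x ^ q ∂μ) ^ (1 / q) ≤ (⨍⁻ x, g x ^ p ∂μ) ^ (1 / p) := by
  set ν : Measure α := (μ univ)⁻¹ • μ
  have hν : ν univ ≤ 1 := ENNReal.inv_mul_le_one _
  have hgν : AEStronglyMeasurable g ν := (hg.smul_measure _).aestronglyMeasurable
  have hexp : 0 ≤ 1 / q - 1 / p := sub_nonneg.2 (one_div_le_one_div_of_le hq hqp)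
  -- By definition the two means are `eLpNorm'` of `g` with respect to the normalized measure `ν`.
  calc eLpNorm' g q ν
      ≤ eLpNorm' g p ν * ν univ ^ (1 / q - 1 / p) :=
        eLpNorm'_le_eLpNorm'_mul_rpow_measure_univ hq hqp hgν
    _ ≤ eLpNorm' g p ν := mul_le_of_le_one_right' (ENNReal.rpow_le_one hν hexp)

-- Nothing is asked of `w 0`, which is a division by zero for the Stummel weight `Ψ t / t ^ d`.
lemma mul_setLIntegral_ball_le_of_le_radial [MetricSpace α] [OpensMeasurableSpace α]
    [NullSingletonClass μ] (g : α → ℝ≥0∞) {w : ℝ → ℝ≥0∞} {K : ℝ≥0∞} {r : ℝ}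
    (hw : ∀ s, 0 < s → s < r → K ≤ w s) (x : α) :
    K * ∫⁻ y in ball x r, g y ∂μ ≤ ∫⁻ y in ball x r, g y * w (dist x y) ∂μ := by
  refine (lintegral_const_mul_le _ _).trans (lintegral_mono_ae ?_)
  filter_upwards [ae_restrict_mem measurableSet_ball,
    ae_restrict_of_ae (Measure.ae_ne μ x)] with y hy hyx
  rw [mul_comm]
  gcongr
  exact hw _ (dist_pos.2 hyx.symm) (mem_ball'.1 hy)

lemma locallyIntegrable_norm_rpow_of_le [TopologicalSpace α] [IsLocallyFiniteMeasure μ]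
    {E : Type*} [NormedAddCommGroup E] {f : α → E} (hf : AEStronglyMeasurable f μ) {q p : ℝ}
    (hq : 0 ≤ q) (hqp : q ≤ p) (hfp : LocallyIntegrable (fun x => ‖f x‖ ^ p) μ) :
    LocallyIntegrable (fun x => ‖f x‖ ^ q) μ := by
  intro x
  obtain ⟨s, hs, hfs⟩ := hfp x
  obtain ⟨t, ht, hμt⟩ := μ.finiteAt_nhds x
  have : IsFiniteMeasure (μ.restrict (s ∩ t)) :=
    isFiniteMeasure_restrict.2 (measure_lt_top_mono inter_subset_right hμt).ne
  exact ⟨s ∩ t, inter_mem hs ht,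
    integrable_norm_rpow_of_le hf.restrict hq (hq.trans hqp) hqp (hfs.mono_set inter_subset_left)⟩

end

lemma mul_laverage_ball_le_of_almost_decreasing {E : Type*} [NormedAddCommGroup E]
    [NormedSpace ℝ E] [FiniteDimensional ℝ E] [Nontrivial E] [MeasurableSpace E] [BorelSpace E]
    (μ : Measure E) [μ.IsAddHaarMeasure] (g : E → ℝ≥0∞) {Ψ : ℝ → ℝ} (hΨ : ∀ t > 0, 0 ≤ Ψ t)
    {A r : ℝ} (hr : 0 < r)
    (hgrowth : ∀ s, 0 < s → s ≤ r →
      Ψ r / r ^ Module.finrank ℝ E ≤ A * (Ψ s / s ^ Module.finrank ℝ E)) (x : E) :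
    ENNReal.ofReal (Ψ r) * ⨍⁻ y in ball x r, g y ∂μ ≤
      ENNReal.ofReal A / μ (ball 0 1) *
        ∫⁻ y in ball x r,
          g y * ENNReal.ofReal (Ψ (dist x y) / dist x y ^ Module.finrank ℝ E) ∂μ := by
  set d := Module.finrank ℝ E
  have hball : (μ (ball x r))⁻¹ = (ENNReal.ofReal (r ^ d))⁻¹ * (μ (ball 0 1))⁻¹ := by
    rw [Measure.addHaar_ball_of_pos _ _ hr, ENNReal.mul_inv (.inr measure_ball_lt_top.ne)
      (.inl ENNReal.ofReal_ne_top)]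
  have hweight : ∀ s, 0 < s → s < r →
      ENNReal.ofReal (Ψ r / r ^ d) ≤ ENNReal.ofReal A * ENNReal.ofReal (Ψ s / s ^ d) := by
    intro s hs hsr
    have hΨs := hΨ s hs
    rw [← ENNReal.ofReal_mul' (by positivity)]
    exact ENNReal.ofReal_le_ofReal (hgrowth s hs hsr.le)
  have hint := mul_setLIntegral_ball_le_of_le_radial (μ := μ) g hweight x
  simp only [mul_left_comm _ (ENNReal.ofReal A)] at hint
  rw [lintegral_const_mul' _ _ ENNReal.ofReal_ne_top] at hint
  calc ENNReal.ofReal (Ψ r) * ⨍⁻ y in ball x r, g y ∂μ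
      = (μ (ball 0 1))⁻¹ * (ENNReal.ofReal (Ψ r / r ^ d) * ∫⁻ y in ball x r, g y ∂μ) := by
        rw [setLAverage_eq, ENNReal.ofReal_div_of_pos (by positivity), ENNReal.div_eq_inv_mul,
          ENNReal.div_eq_inv_mul, hball]
        ring
    _ ≤ (μ (ball 0 1))⁻¹ * (ENNReal.ofReal A *
          ∫⁻ y in ball x r, g y * ENNReal.ofReal (Ψ (dist x y) / dist x y ^ d) ∂μ) := by
        gcongr
    _ = _ := by rw [ENNReal.div_eq_inv_mul, mul_assoc]

lemma ofReal_abs_rpow (t : ℝ) {p : ℝ} (hp : 0 ≤ p) : ENNReal.ofReal (|t| ^ p) = ‖t‖ₑ ^ p := by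
  rw [← ENNReal.ofReal_rpow_of_nonneg (abs_nonneg t) hp, Real.enorm_eq_ofReal_abs]

section Euclidean

variable {n : ℕ} {p q : ℝ} {Ψ : ℝ → ℝ} {f : Euc n → ℝ}

-- `MemLocLp` makes no assumption on `f` itself beyond local integrability of `|f| ^ p`, so the sign
-- of `f` need not be measurable and `|f|` takes the place of `f` below.
lemma MemLocLp.aestronglyMeasurable_abs (hp : p ≠ 0) (hf : MemLocLp n p f) :
    AEStronglyMeasurable (fun y => |f y|) volume := by
  have hroot := (LocallyIntegrable.aestronglyMeasurable hf).aemeasurable.pow_const p⁻¹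
  simpa only [Real.rpow_rpow_inv (abs_nonneg _) hp] using hroot.aestronglyMeasurable

lemma MemLocLp.mono_exponent (hq : 0 < q) (hqp : q ≤ p) (hf : MemLocLp n p f) :
    MemLocLp n q f := by
  have habs := hf.aestronglyMeasurable_abs (hq.trans_le hqp).ne'
  have hnorm : LocallyIntegrable (fun y => ‖|f y|‖ ^ p) volume := by
    simpa only [Real.norm_eq_abs, abs_abs, MemLocLp] using hf
  simpa only [Real.norm_eq_abs, abs_abs, MemLocLp] using
    locallyIntegrable_norm_rpow_of_le habs hq.le hqp hnorm

lemma morreyNorm_eq_iSup_laverage (hp : 0 ≤ p) :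
    morreyNorm n p Ψ f = ⨆ (x : Euc n) (r : ℝ) (_ : 0 < r),
      ENNReal.ofReal (Ψ r)⁻¹ * (⨍⁻ y in ball x r, ‖f y‖ₑ ^ p ∂volume) ^ (1 / p) := by
  have hp' : 0 ≤ 1 / p := by positivity
  simp only [morreyNorm, ofReal_abs_rpow _ hp, setLAverage_eq, ENNReal.div_eq_inv_mul,
    ENNReal.mul_rpow_of_nonneg _ _ hp', mul_left_comm, mul_assoc]

lemma morreyNorm_mono_exponent (hq : 0 < q) (hqp : q ≤ p)
    (hf : AEStronglyMeasurable (fun y => |f y|) volume) :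
    morreyNorm n q Ψ f ≤ morreyNorm n p Ψ f := by
  have henorm : AEMeasurable (fun y => ‖f y‖ₑ) volume := by
    simpa only [Real.enorm_abs] using hf.enorm
  rw [morreyNorm_eq_iSup_laverage hq.le, morreyNorm_eq_iSup_laverage (hq.le.trans hqp)]
  gcongr ⨆ x, ⨆ r, ⨆ _, _ * ?_ with x r
  exact rpow_laverage_rpow_mono henorm.restrict hq hqp

lemma MemMorrey.mono_exponent (hq : 0 < q) (hqp : q ≤ p) (hf : MemMorrey n p Ψ f) :
    MemMorrey n q Ψ f :=
  ⟨hf.1.mono_exponent hq hqp, (morreyNorm_mono_exponent hq hqp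
    (hf.1.aestronglyMeasurable_abs (hq.trans_le hqp).ne')).trans_lt hf.2⟩

lemma rpow_mul_rpow_laverage_le_stummelMod (hn : 1 ≤ n) (hp : 0 < p) (hΨ : ∀ t > 0, 0 ≤ Ψ t)
    {A r : ℝ} (hr : 0 < r)
    (hgrowth : ∀ s, 0 < s → s ≤ r → Ψ r / r ^ (n : ℝ) ≤ A * (Ψ s / s ^ (n : ℝ))) (x : Euc n) :
    ENNReal.ofReal (Ψ r) ^ (1 / p) * (⨍⁻ y in ball x r, ‖f y‖ₑ ^ p ∂volume) ^ (1 / p) ≤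
      (ENNReal.ofReal A / volume (ball (0 : Euc n) 1)) ^ (1 / p) * stummelMod n p Ψ f r := by
  have : NeZero n := ⟨Nat.one_le_iff_ne_zero.1 hn⟩
  have hp' : 0 ≤ 1 / p := by positivity
  have havg := mul_laverage_ball_le_of_almost_decreasing volume (fun y => ‖f y‖ₑ ^ p) hΨ hr
    (A := A) (by simpa only [finrank_euclideanSpace_fin, Real.rpow_natCast] using hgrowth) x
  have hintegrand : ∀ y, ‖f y‖ₑ ^ p * ENNReal.ofReal (Ψ (dist x y) / dist x y ^ n) =
      ENNReal.ofReal (|f y| ^ p * Ψ (dist x y) / dist x y ^ (n : ℝ)) := by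
    intro y
    rw [← ofReal_abs_rpow _ hp.le, ← ENNReal.ofReal_mul (by positivity), mul_div_assoc,
      Real.rpow_natCast]
  simp only [finrank_euclideanSpace_fin, hintegrand] at havg
  rw [← ENNReal.mul_rpow_of_nonneg _ _ hp']
  refine (ENNReal.rpow_le_rpow havg hp').trans ?_
  rw [ENNReal.mul_rpow_of_nonneg _ _ hp']
  gcongr
  exact le_iSup_of_le x le_rfl

lemma MemLocLp.memMorrey_of_stummelMod_le {Ψ₁ Ψ₂ : ℝ → ℝ} (hn : 1 ≤ n) (hp : 0 < p)
    (hΨ₁pos : ∀ t > 0, 0 < Ψ₁ t) (hΨ₂pos : ∀ t > 0, 0 < Ψ₂ t) {A c : ℝ}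
    (hgrowth : ∀ s r : ℝ, 0 < s → s ≤ r → Ψ₁ r / r ^ (n : ℝ) ≤ A * (Ψ₁ s / s ^ (n : ℝ)))
    (hf : MemLocLp n p f)
    (hbound : ∀ r > 0, stummelMod n p Ψ₁ f r ≤ ENNReal.ofReal (c * Ψ₁ r ^ (1 / p) * Ψ₂ r)) :
    MemMorrey n p Ψ₂ f := by
  refine ⟨hf, ?_⟩
  have hp' : 0 ≤ 1 / p := by positivity
  set K := (ENNReal.ofReal A / volume (ball (0 : Euc n) 1)) ^ (1 / p)
  have hK : K < ∞ := ENNReal.rpow_lt_top_of_nonneg hp'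
    (ENNReal.div_ne_top ENNReal.ofReal_ne_top (measure_ball_pos _ _ one_pos).ne')
  suffices hnorm : morreyNorm n p Ψ₂ f ≤ K * ENNReal.ofReal c from
    hnorm.trans_lt (ENNReal.mul_lt_top hK ENNReal.ofReal_lt_top)
  rw [morreyNorm_eq_iSup_laverage hp.le]
  refine iSup_le fun x => iSup_le fun r => iSup_le fun hr => ?_
  set M := (⨍⁻ y in ball x r, ‖f y‖ₑ ^ p ∂volume) ^ (1 / p)
  set a := ENNReal.ofReal (Ψ₁ r ^ (1 / p))
  have hΨ₁r := hΨ₁pos r hr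
  have hΨ₂r := hΨ₂pos r hr
  have ha : a ≠ 0 := (ENNReal.ofReal_pos.2 (by positivity)).ne'
  have hmean : a * M ≤ a * (K * ENNReal.ofReal c * ENNReal.ofReal (Ψ₂ r)) :=
    calc a * M = ENNReal.ofReal (Ψ₁ r) ^ (1 / p) * M := by
          rw [ENNReal.ofReal_rpow_of_nonneg hΨ₁r.le hp']
      _ ≤ K * stummelMod n p Ψ₁ f r :=
          rpow_mul_rpow_laverage_le_stummelMod hn hp (fun t ht => (hΨ₁pos t ht).le) hr
            (fun s => hgrowth s r) x
      _ ≤ K * ENNReal.ofReal (c * Ψ₁ r ^ (1 / p) * Ψ₂ r) := by gcongr; exact hbound r hr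
      _ = a * (K * ENNReal.ofReal c * ENNReal.ofReal (Ψ₂ r)) := by
          rw [ENNReal.ofReal_mul' hΨ₂r.le, ENNReal.ofReal_mul' (by positivity)]
          ring
  rw [ENNReal.ofReal_inv_of_pos hΨ₂r, ← ENNReal.div_eq_inv_mul]
  exact ENNReal.div_le_of_le_mul ((ENNReal.mul_le_mul_iff_right ha ENNReal.ofReal_ne_top).1 hmean)

end Euclidean

theorem stummel_subset_morrey_general {n : ℕ} (hn : 1 ≤ n) {p₁ p₂ : ℝ} (hp₂ : 0 < p₂)
    (hp : p₂ ≤ p₁) {Ψ₁ Ψ₂ : ℝ → ℝ} (hΨ₁pos : ∀ t > 0, 0 < Ψ₁ t) (hΨ₂pos : ∀ t > 0, 0 < Ψ₂ t)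
    {A : ℝ}
    (hgrowth : ∀ s r : ℝ, 0 < s → s ≤ r → Ψ₁ r / r ^ (n : ℝ) ≤ A * (Ψ₁ s / s ^ (n : ℝ)))
    {f : Euc n → ℝ} (hf : MemLocLp n p₁ f) {c : ℝ}
    (hbound : ∀ r > 0, stummelMod n p₁ Ψ₁ f r ≤
      ENNReal.ofReal (c * Ψ₁ r ^ (1 / p₁) * Ψ₂ r)) :
    MemMorrey n p₂ Ψ₂ f :=
  (hf.memMorrey_of_stummelMod_le hn (hp₂.trans_le hp) hΨ₁pos hΨ₂pos hgrowth
    hbound).mono_exponent hp₂ hp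

/-- If `Ψ₁(r)/r^n ≤ A Ψ₁(s)/s^n` for `0 < s ≤ r`, `f ∈ S_{p₁,Ψ₁}(ℝ^n)` and
`η_{p₁,Ψ₁}f(r) ≤ c Ψ₁(r)^{1/p₁} Ψ₂(r)` for every `r > 0`, then `f ∈ L^{p₂,Ψ₂}(ℝ^n)`. -/
theorem stummel_subset_morrey (n : ℕ) (hn : 1 ≤ n) (p₁ p₂ : ℝ)
    (hp₂ : 1 ≤ p₂) (hp : p₂ ≤ p₁)
    (Ψ₁ Ψ₂ : ℝ → ℝ) (hΨ₁meas : Measurable Ψ₁) (hΨ₂meas : Measurable Ψ₂)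
    (hΨ₁pos : ∀ t > 0, 0 < Ψ₁ t) (hΨ₂pos : ∀ t > 0, 0 < Ψ₂ t)
    (A : ℝ) (hA : 0 < A)
    (hgrowth : ∀ s r : ℝ, 0 < s → s ≤ r → Ψ₁ r / r ^ (n : ℝ) ≤ A * (Ψ₁ s / s ^ (n : ℝ)))
    (f : Euc n → ℝ) (hf : MemStummel n p₁ Ψ₁ f)
    (c : ℝ) (hc : 0 < c)
    (hbound : ∀ r > 0, stummelMod n p₁ Ψ₁ f r ≤
      ENNReal.ofReal (c * Ψ₁ r ^ (1 / p₁) * Ψ₂ r)) :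
    MemMorrey n p₂ Ψ₂ f :=
  stummel_subset_morrey_general hn (zero_lt_one.trans_le hp₂) hp hΨ₁pos hΨ₂pos hgrowth hf.1 hbound
end

section
/- Let n ≥ 1, 1 ≤ p₂ ≤ p₁ < ∞, and 0 < α < n. If f ∈ S_{p₁,α}(ℝ^n) and there exist c > 0 and 0 < σ < α p₂/p₁ such that η_{p₁,α}f(r) ≤ c r^{σ/p₂} for every r > 0, then f belongs to the Morrey space L^{p₂, n + σ − α p₂/p₁}(ℝ^n). -/
/-! On a ball `B = B(x, r)` the weight satisfies `|x - y|^{-(n-α)} ≥ r^{-(n-α)}`, so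
`(∫_B |f|^{p₁})^{1/p₁} ≤ r^{(n-α)/p₁} η_{p₁,α}f(r)`. Hölder's inequality passes from the exponent
`p₁` to `p₂` at the price of `|B|^{1/p₂ - 1/p₁}`, a constant times `r^{n(1/p₂ - 1/p₁)}`. With the
growth bound `η_{p₁,α}f(r) ≤ c r^{σ/p₂}` the powers of `r` add up to `(n + σ - α p₂/p₁)/p₂`, and
the Morrey norm is at most `c |B(0,1)|^{1/p₂ - 1/p₁}`. -/

open MeasureTheory Metric Filter Set ENNReal

section Rpow

lemma rpow_le_one_add_rpow {a p q : ℝ} (ha : 0 ≤ a) (hp : 0 ≤ p) (hpq : p ≤ q) :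
    a ^ p ≤ 1 + a ^ q := by
  rcases le_total a 1 with h | h
  · linarith [Real.rpow_le_one ha h hp, Real.rpow_nonneg ha q]
  · linarith [Real.rpow_le_rpow_of_exponent_le h hpq]

lemma ofReal_rpow_mul_ofReal_rpow {r : ℝ} (hr : 0 < r) (a b : ℝ) :
    ENNReal.ofReal (r ^ a) * ENNReal.ofReal (r ^ b) = ENNReal.ofReal (r ^ (a + b)) := by
  rw [← ENNReal.ofReal_mul (by positivity), ← Real.rpow_add hr]

end Rpow

section MeasureSpace

variable {X : Type*} [MeasurableSpace X] {μ : Measure X} {g : X → ℝ} {p q : ℝ}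

lemma aemeasurable_of_rpow (hg : 0 ≤ g) (hp : p ≠ 0) (h : AEMeasurable (fun y => g y ^ p) μ) :
    AEMeasurable g μ := by
  simpa only [Real.rpow_rpow_inv (hg _) hp] using h.pow_const p⁻¹

lemma lintegral_rpow_le_lintegral_rpow_mul_measure_univ (hg : 0 ≤ g) (hgm : AEMeasurable g μ)
    (hp : 0 < p) (hpq : p ≤ q) :
    (∫⁻ y, ENNReal.ofReal (g y ^ p) ∂μ) ^ (1 / p) ≤
      (∫⁻ y, ENNReal.ofReal (g y ^ q) ∂μ) ^ (1 / q) * μ univ ^ (1 / p - 1 / q) := by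
  have enorm_rpow {s : ℝ} (hs : 0 < s) (y : X) : ‖g y‖ₑ ^ s = ENNReal.ofReal (g y ^ s) := by
    rw [Real.enorm_of_nonneg (hg y), ENNReal.ofReal_rpow_of_nonneg (hg y) hs.le]
  simpa only [eLpNorm', enorm_rpow hp, enorm_rpow (hp.trans_le hpq)] using
    eLpNorm'_le_eLpNorm'_mul_rpow_measure_univ hp hpq hgm.aestronglyMeasurable

lemma locallyIntegrable_rpow_of_exponent_le [TopologicalSpace X] [IsLocallyFiniteMeasure μ]
    (hg : 0 ≤ g) (hp : 0 < p) (hpq : p ≤ q) (h : LocallyIntegrable (fun y => g y ^ q) μ) :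
    LocallyIntegrable (fun y => g y ^ p) μ := by
  intro x
  obtain ⟨U, hU, hgU⟩ := h x
  obtain ⟨V, hV, hV_lt_top⟩ := μ.finiteAt_nhds x
  have hone : IntegrableOn (fun _ => (1 : ℝ)) (U ∩ V) μ :=
    (integrableOn_const hV_lt_top.ne).mono_set inter_subset_right
  have hgUV : IntegrableOn (fun y => g y ^ q) (U ∩ V) μ := hgU.mono_set inter_subset_left
  have hgm : AEMeasurable g (μ.restrict (U ∩ V)) :=
    aemeasurable_of_rpow hg (hp.trans_le hpq).ne' hgUV.aestronglyMeasurable.aemeasurable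
  refine ⟨U ∩ V, inter_mem hU hV, (hone.add hgUV).mono' (hgm.pow_const p).aestronglyMeasurable
    (Eventually.of_forall fun y => ?_)⟩
  rw [Real.norm_of_nonneg (Real.rpow_nonneg (hg y) p)]
  exact rpow_le_one_add_rpow (hg y) hp.le hpq

end MeasureSpace

lemma setLIntegral_ball_le_rpow_mul_setLIntegral_div_dist_rpow {X : Type*} [MetricSpace X]
    [MeasurableSpace X] [OpensMeasurableSpace X] {μ : Measure X} [NullSingletonClass μ]
    {s : ℝ} (hs : 0 ≤ s) (g : X → ℝ) (x : X) (r : ℝ) :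
    ∫⁻ y in ball x r, ENNReal.ofReal (g y) ∂μ ≤
      ENNReal.ofReal (r ^ s) * ∫⁻ y in ball x r, ENNReal.ofReal (g y / dist x y ^ s) ∂μ := by
  rw [← lintegral_const_mul' _ _ ENNReal.ofReal_ne_top]
  refine setLIntegral_mono_ae' measurableSet_ball ?_
  -- The centre is discarded: for `s > 0` the quotient takes the junk value `g x / 0 = 0` there.
  filter_upwards [μ.ae_ne x] with y hyx hy
  have hdist : 0 < dist x y := dist_pos.2 hyx.symm
  have hpow : dist x y ^ s ≤ r ^ s := Real.rpow_le_rpow hdist.le (mem_ball'.1 hy).le hs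
  have hpos : 0 < dist x y ^ s := Real.rpow_pos_of_pos hdist s
  rcases le_total (g y) 0 with hg | hg
  · simp only [ENNReal.ofReal_of_nonpos hg, zero_le]
  rw [← ENNReal.ofReal_mul (hpos.le.trans hpow)]
  refine ENNReal.ofReal_le_ofReal ?_
  rw [← mul_div_assoc, le_div_iff₀ hpos, mul_comm]
  gcongr

lemma addHaar_ball_rpow {E : Type*} [NormedAddCommGroup E] [NormedSpace ℝ E]
    [FiniteDimensional ℝ E] [MeasurableSpace E] [BorelSpace E] (μ : Measure E)
    [μ.IsAddHaarMeasure] (x : E) {r : ℝ} (hr : 0 < r) (θ : ℝ) :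
    μ (ball x r) ^ θ =
      ENNReal.ofReal (r ^ (Module.finrank ℝ E * θ)) * μ (ball 0 1) ^ θ := by
  have hrpow : 0 < r ^ Module.finrank ℝ E := pow_pos hr _
  rw [μ.addHaar_ball_of_pos x hr,
    ENNReal.mul_rpow_of_ne_zero (ENNReal.ofReal_pos.2 hrpow).ne'
      (measure_ball_pos μ 0 one_pos).ne',
    ENNReal.ofReal_rpow_of_pos hrpow, ← Real.rpow_natCast_mul hr.le]

section Stummel

variable {n : ℕ} {p p₁ p₂ α : ℝ} {f : Euc n → ℝ}

lemma lintegral_ball_rpow_le_stummelModA (hn : 1 ≤ n) (hp : 0 < p) (hαn : α ≤ n)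
    (f : Euc n → ℝ) (x : Euc n) {r : ℝ} (hr : 0 < r) :
    (∫⁻ y in ball x r, ENNReal.ofReal (|f y| ^ p)) ^ (1 / p) ≤
      ENNReal.ofReal (r ^ ((n - α) / p)) * stummelModA n p α f r := by
  have : Nonempty (Fin n) := ⟨⟨0, hn⟩⟩
  calc (∫⁻ y in ball x r, ENNReal.ofReal (|f y| ^ p)) ^ (1 / p)
      ≤ (ENNReal.ofReal (r ^ (n - α)) *
          ∫⁻ y in ball x r, ENNReal.ofReal (|f y| ^ p / dist x y ^ (n - α))) ^ (1 / p) := by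
        gcongr
        exact setLIntegral_ball_le_rpow_mul_setLIntegral_div_dist_rpow (sub_nonneg.2 hαn) _ x r
    _ = ENNReal.ofReal (r ^ ((n - α) / p)) *
          (∫⁻ y in ball x r, ENNReal.ofReal (|f y| ^ p / dist x y ^ (n - α))) ^ (1 / p) := by
        rw [ENNReal.mul_rpow_of_nonneg _ _ (by positivity),
          ENNReal.ofReal_rpow_of_pos (by positivity), ← Real.rpow_mul hr.le, mul_one_div]
    _ ≤ ENNReal.ofReal (r ^ ((n - α) / p)) * stummelModA n p α f r := by
        gcongr
        exact le_iSup (fun x : Euc n => (∫⁻ y in ball x r,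
          ENNReal.ofReal (|f y| ^ p / dist x y ^ (n - α))) ^ (1 / p)) x

lemma lintegral_ball_rpow_le_stummelModA_of_exponent_le (hn : 1 ≤ n) (hp₂ : 0 < p₂)
    (hp : p₂ ≤ p₁) (hαn : α ≤ n) (hf : AEMeasurable (fun y => |f y|)) (x : Euc n) {r : ℝ}
    (hr : 0 < r) :
    (∫⁻ y in ball x r, ENNReal.ofReal (|f y| ^ p₂)) ^ (1 / p₂) ≤
      ENNReal.ofReal (r ^ ((n - α) / p₁ + n * (1 / p₂ - 1 / p₁))) * stummelModA n p₁ α f r *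
        volume (ball (0 : Euc n) 1) ^ (1 / p₂ - 1 / p₁) := by
  set θ := 1 / p₂ - 1 / p₁
  calc (∫⁻ y in ball x r, ENNReal.ofReal (|f y| ^ p₂)) ^ (1 / p₂)
      ≤ (∫⁻ y in ball x r, ENNReal.ofReal (|f y| ^ p₁)) ^ (1 / p₁) * volume (ball x r) ^ θ := by
        simpa only [Measure.restrict_apply_univ] using
          lintegral_rpow_le_lintegral_rpow_mul_measure_univ (fun y => abs_nonneg (f y))
            hf.restrict hp₂ hp
    _ ≤ ENNReal.ofReal (r ^ ((n - α) / p₁)) * stummelModA n p₁ α f r *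
          (ENNReal.ofReal (r ^ (n * θ)) * volume (ball (0 : Euc n) 1) ^ θ) := by
        rw [addHaar_ball_rpow volume x hr, finrank_euclideanSpace_fin]
        gcongr
        exact lintegral_ball_rpow_le_stummelModA hn (hp₂.trans_le hp) hαn f x hr
    _ = ENNReal.ofReal (r ^ ((n - α) / p₁ + n * θ)) * stummelModA n p₁ α f r *
          volume (ball (0 : Euc n) 1) ^ θ := by
        rw [← ofReal_rpow_mul_ofReal_rpow hr]
        ring

lemma morreyNormC_le_of_stummelModA_le {σ : ℝ} {C : ℝ≥0∞} (hn : 1 ≤ n) (hp₂ : 0 < p₂)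
    (hp : p₂ ≤ p₁) (hαn : α ≤ n) (hf : AEMeasurable (fun y => |f y|))
    (hbound : ∀ r > 0, stummelModA n p₁ α f r ≤ C * ENNReal.ofReal (r ^ (σ / p₂))) :
    morreyNormC n p₂ (n + σ - α * p₂ / p₁) f ≤
      C * volume (ball (0 : Euc n) 1) ^ (1 / p₂ - 1 / p₁) := by
  refine iSup_le fun x => iSup₂_le fun r hr => ?_
  set V := volume (ball (0 : Euc n) 1) ^ (1 / p₂ - 1 / p₁)
  set a := (n - α) / p₁ + n * (1 / p₂ - 1 / p₁)
  set b := -((n + σ - α * p₂ / p₁) / p₂)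
  have hexp : b + (a + σ / p₂) = 0 := by
    have hp₁ : 0 < p₁ := hp₂.trans_le hp
    simp only [a, b]
    field_simp
    ring
  calc ENNReal.ofReal (r ^ b) * (∫⁻ y in ball x r, ENNReal.ofReal (|f y| ^ p₂)) ^ (1 / p₂)
      ≤ ENNReal.ofReal (r ^ b) *
          (ENNReal.ofReal (r ^ a) * (C * ENNReal.ofReal (r ^ (σ / p₂))) * V) := by
        gcongr
        refine (lintegral_ball_rpow_le_stummelModA_of_exponent_le hn hp₂ hp hαn hf x hr).trans ?_
        gcongr
        exact hbound r hr
    _ = ENNReal.ofReal (r ^ b) * (ENNReal.ofReal (r ^ a) * ENNReal.ofReal (r ^ (σ / p₂))) *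
          (C * V) := by ring
    _ = C * V := by
        rw [ofReal_rpow_mul_ofReal_rpow hr, ofReal_rpow_mul_ofReal_rpow hr, hexp,
          Real.rpow_zero, ENNReal.ofReal_one, one_mul]

end Stummel

theorem stummel_subset_morrey_classical_general {n : ℕ} {p₁ p₂ α σ : ℝ} {f : Euc n → ℝ} {C : ℝ≥0∞}
    (hn : 1 ≤ n) (hp₂ : 0 < p₂) (hp : p₂ ≤ p₁) (hαn : α ≤ n) (hf : MemLocLp n p₁ f)
    (hC : C ≠ ⊤) (hbound : ∀ r > 0, stummelModA n p₁ α f r ≤ C * ENNReal.ofReal (r ^ (σ / p₂))) :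
    MemMorreyC n p₂ (n + σ - α * p₂ / p₁) f := by
  have hp₁ : 0 < p₁ := hp₂.trans_le hp
  have habs : 0 ≤ fun y => |f y| := fun y => abs_nonneg (f y)
  have hfm : AEMeasurable (fun y => |f y|) :=
    aemeasurable_of_rpow habs hp₁.ne' (LocallyIntegrable.aestronglyMeasurable hf).aemeasurable
  have hθ : 0 ≤ 1 / p₂ - 1 / p₁ := sub_nonneg.2 (one_div_le_one_div_of_le hp₂ hp)
  refine ⟨locallyIntegrable_rpow_of_exponent_le habs hp₂ hp hf,
    (morreyNormC_le_of_stummelModA_le hn hp₂ hp hαn hfm hbound).trans_lt ?_⟩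
  exact ENNReal.mul_lt_top hC.lt_top
    (ENNReal.rpow_lt_top_of_nonneg hθ measure_ball_lt_top.ne)

/-- If `f ∈ S_{p₁,α}(ℝ^n)` and `η_{p₁,α}f(r) ≤ c r^{σ/p₂}` for every `r > 0`,
where `0 < σ < α p₂/p₁`, then `f ∈ L^{p₂, n + σ − α p₂/p₁}(ℝ^n)`. -/
theorem stummel_subset_morrey_classical (n : ℕ) (hn : 1 ≤ n) (p₁ p₂ α : ℝ)
    (hp₂ : 1 ≤ p₂) (hp : p₂ ≤ p₁) (hα : 0 < α) (hαn : α < n)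
    (f : Euc n → ℝ) (hf : MemStummelA n p₁ α f)
    (c σ : ℝ) (hc : 0 < c) (hσ₀ : 0 < σ) (hσ₁ : σ < α * p₂ / p₁)
    (hbound : ∀ r > 0, stummelModA n p₁ α f r ≤ ENNReal.ofReal (c * r ^ (σ / p₂))) :
    MemMorreyC n p₂ ((n : ℝ) + σ - α * p₂ / p₁) f :=
  stummel_subset_morrey_classical_general hn (one_pos.trans_le hp₂) hp hαn.le hf.1
    ENNReal.ofReal_ne_top fun r hr => (hbound r hr).trans_eq (ENNReal.ofReal_mul hc.le)
end

section
/- Let n ≥ 1 and 1 ≤ p₂ < p₁ < ∞. If 0 ≤ λ < n and (n − λ) p₂ / p₁ < α < n, then the weak Morrey space wL^{p₁,λ}(ℝ^n) is contained in the Stummel class S_{p₂,α}(ℝ^n). -/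
/-!
Both halves of the argument rest on one inequality: if `μ {g > t} ≤ A t^(-p)` for `t > T`, then,
splitting the layer-cake integral at height `T`, `∫ g^q dμ ≤ μ(X) T^q + q/(p-q) A T^(q-p)` for
`0 < q < p`.

Applied to `|f|` on `B(x,r)` at height `T = r^((λ-n)/p₁)`, it shows that `wL^{p₁,λ}` is contained in
the strong Morrey space `L^{p₂,β}` with `β = n - (n-λ) p₂ / p₁`. The membership `f ∈ L^{p₂,β}` says
that the measure `ν = |f|^p₂ dy` satisfies `ν(B(x,r)) ≤ C r^β`, which is a distribution bound of
order `β` for `y ↦ |x-y|⁻¹` with respect to `ν`. The same inequality at height `T = 1/r` therefore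
bounds the Stummel integral `∫_{B(x,r)} |x-y|^(-(n-α)) dν` by a multiple of `r^(β-(n-α))`, whose
exponent is positive exactly when `(n-λ) p₂ / p₁ < α`.
-/

open MeasureTheory Metric Filter Set ENNReal

section LayerCake

lemma setLIntegral_Ioc_rpow {T q : ℝ} (hT : 0 ≤ T) (hq : 0 < q) :
    ∫⁻ t in Ioc 0 T, ENNReal.ofReal (t ^ (q - 1)) = ENNReal.ofReal (T ^ q / q) := by
  rw [← ofReal_integral_eq_lintegral_ofReal, ← intervalIntegral.integral_of_le hT,
    integral_rpow (Or.inl (by linarith)), sub_add_cancel, Real.zero_rpow hq.ne', sub_zero]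
  · exact (intervalIntegrable_iff_integrableOn_Ioc_of_le hT).1
      (intervalIntegral.intervalIntegrable_rpow' (by linarith))
  · filter_upwards [ae_restrict_mem measurableSet_Ioc] with t ht
    exact Real.rpow_nonneg ht.1.le _

lemma setLIntegral_Ioi_rpow_of_lt {T a : ℝ} (hT : 0 < T) (ha : a < -1) :
    ∫⁻ t in Ioi T, ENNReal.ofReal (t ^ a) = ENNReal.ofReal (-T ^ (a + 1) / (a + 1)) := by
  rw [← ofReal_integral_eq_lintegral_ofReal (integrableOn_Ioi_rpow_of_lt ha hT),
    integral_Ioi_rpow_of_lt ha hT]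
  filter_upwards [ae_restrict_mem measurableSet_Ioi] with t ht
  exact Real.rpow_nonneg (hT.trans ht).le _

variable {X : Type*} [MeasurableSpace X] {μ : Measure X} {g : X → ℝ} {p q T : ℝ} {A : ℝ≥0∞}

lemma setLIntegral_Ioc_meas_lt_mul_rpow_le (hq : 0 < q) (hT : 0 ≤ T) :
    ∫⁻ t in Ioc 0 T, μ {y | t < g y} * ENNReal.ofReal (t ^ (q - 1)) ≤
      μ univ * ENNReal.ofReal (T ^ q / q) := by
  calc
    _ ≤ ∫⁻ t in Ioc 0 T, μ univ * ENNReal.ofReal (t ^ (q - 1)) := by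
      gcongr
      exact subset_univ _
    _ = μ univ * ENNReal.ofReal (T ^ q / q) := by
      rw [lintegral_const_mul _ (by fun_prop), setLIntegral_Ioc_rpow hT hq]

lemma setLIntegral_Ioi_meas_lt_mul_rpow_le (hqp : q < p) (hT : 0 < T)
    (h : ∀ t > T, μ {y | t < g y} ≤ A * ENNReal.ofReal (t ^ (-p))) :
    ∫⁻ t in Ioi T, μ {y | t < g y} * ENNReal.ofReal (t ^ (q - 1)) ≤
      A * ENNReal.ofReal (T ^ (q - p) / (p - q)) := by
  calc
    _ ≤ ∫⁻ t in Ioi T, A * ENNReal.ofReal (t ^ (q - p - 1)) := by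
      refine setLIntegral_mono' measurableSet_Ioi fun t ht => ?_
      have ht₀ : 0 < t := hT.trans ht
      calc
        _ ≤ A * ENNReal.ofReal (t ^ (-p)) * ENNReal.ofReal (t ^ (q - 1)) := by
          gcongr
          exact h t ht
        _ = A * ENNReal.ofReal (t ^ (q - p - 1)) := by
          rw [mul_assoc, ← ENNReal.ofReal_mul (by positivity), ← Real.rpow_add ht₀]
          ring_nf
    _ = A * ENNReal.ofReal (T ^ (q - p) / (p - q)) := by
      rw [lintegral_const_mul _ (by fun_prop), setLIntegral_Ioi_rpow_of_lt hT (by linarith),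
        sub_add_cancel, ← neg_sub p q, div_neg, neg_div, neg_neg]

lemma lintegral_rpow_le_of_meas_lt_le (hg₀ : 0 ≤ᵐ[μ] g) (hg : AEMeasurable g μ) (hq : 0 < q)
    (hqp : q < p) (hT : 0 < T)
    (h : ∀ t > T, μ {y | t < g y} ≤ A * ENNReal.ofReal (t ^ (-p))) :
    ∫⁻ y, ENNReal.ofReal (g y ^ q) ∂μ ≤
      μ univ * ENNReal.ofReal (T ^ q) + A * ENNReal.ofReal (q / (p - q) * T ^ (q - p)) := by
  have hmul : ∀ c, ENNReal.ofReal q * ENNReal.ofReal c = ENNReal.ofReal (q * c) := fun c =>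
    (ENNReal.ofReal_mul hq.le).symm
  calc
    _ = ENNReal.ofReal q *
          ((∫⁻ t in Ioc 0 T, μ {y | t < g y} * ENNReal.ofReal (t ^ (q - 1))) +
            ∫⁻ t in Ioi T, μ {y | t < g y} * ENNReal.ofReal (t ^ (q - 1))) := by
      rw [lintegral_rpow_eq_lintegral_meas_lt_mul μ hg₀ hg hq, ← Ioc_union_Ioi_eq_Ioi hT.le,
        lintegral_union measurableSet_Ioi (Ioc_disjoint_Ioi le_rfl)]
    _ ≤ ENNReal.ofReal q *
          (μ univ * ENNReal.ofReal (T ^ q / q) +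
            A * ENNReal.ofReal (T ^ (q - p) / (p - q))) := by
      gcongr
      · exact setLIntegral_Ioc_meas_lt_mul_rpow_le hq hT.le
      · exact setLIntegral_Ioi_meas_lt_mul_rpow_le hqp hT h
    _ = _ := by
      rw [mul_add, mul_left_comm, hmul, mul_left_comm, hmul, mul_div_cancel₀ _ hq.ne',
        div_mul_eq_mul_div, mul_div_assoc]

end LayerCake

-- The integrand is `0`, not `∞`, at `y = x`; since `ν {x} = 0` this does not change the integral.
lemma setLIntegral_ball_inv_dist_rpow_le {X : Type*} [PseudoMetricSpace X] [MeasurableSpace X]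
    [OpensMeasurableSpace X] {ν : Measure X} {x : X} {r s β : ℝ} {C : ℝ≥0∞} (hr : 0 < r)
    (hs : 0 < s) (hsβ : s < β)
    (hν : ∀ ρ, 0 < ρ → ρ ≤ r → ν (ball x ρ) ≤ C * ENNReal.ofReal (ρ ^ β)) :
    ∫⁻ y in ball x r, ENNReal.ofReal ((dist x y)⁻¹ ^ s) ∂ν ≤
      C * ENNReal.ofReal (β / (β - s) * r ^ (β - s)) := by
  have hβs : 0 < β - s := sub_pos.2 hsβ
  have distribution : ∀ t > r⁻¹,
      ν.restrict (ball x r) {y | t < (dist x y)⁻¹} ≤ C * ENNReal.ofReal (t ^ (-β)) := by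
    intro t ht
    have ht₀ : 0 < t := (inv_pos.2 hr).trans ht
    have hsub : {y | t < (dist x y)⁻¹} ⊆ ball x t⁻¹ := fun y hy =>
      mem_ball'.2 <| (lt_inv_comm₀ ht₀ (inv_pos.1 (ht₀.trans hy))).1 hy
    calc
      _ ≤ ν (ball x t⁻¹) := (Measure.restrict_le_self _).trans (measure_mono hsub)
      _ ≤ C * ENNReal.ofReal (t⁻¹ ^ β) := hν _ (inv_pos.2 ht₀) (inv_le_of_inv_le₀ hr ht.le)
      _ = C * ENNReal.ofReal (t ^ (-β)) := by rw [Real.inv_rpow ht₀.le, Real.rpow_neg ht₀.le]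
  have hmeas : Measurable fun y => (dist x y)⁻¹ :=
    (continuous_const.dist continuous_id).measurable.inv
  calc
    _ ≤ ν (ball x r) * ENNReal.ofReal (r⁻¹ ^ s) +
          C * ENNReal.ofReal (s / (β - s) * r⁻¹ ^ (s - β)) := by
      simpa only [Measure.restrict_apply_univ] using
        lintegral_rpow_le_of_meas_lt_le (Eventually.of_forall fun y => inv_nonneg.2 dist_nonneg)
          hmeas.aemeasurable hs hsβ (inv_pos.2 hr) distribution
    _ ≤ C * ENNReal.ofReal (r ^ β) * ENNReal.ofReal (r⁻¹ ^ s) +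
          C * ENNReal.ofReal (s / (β - s) * r⁻¹ ^ (s - β)) := by
      gcongr
      exact hν r hr le_rfl
    _ = C * ENNReal.ofReal (β / (β - s) * r ^ (β - s)) := by
      rw [mul_assoc, ← mul_add, ← ENNReal.ofReal_mul (by positivity),
        ← ENNReal.ofReal_add (by positivity) (by positivity), Real.inv_rpow hr.le,
        Real.inv_rpow hr.le, ← Real.rpow_neg hr.le, ← Real.rpow_neg hr.le, ← Real.rpow_add hr,
        neg_sub, ← sub_eq_add_neg]
      congr 2
      field_simp
      ring

lemma rpow_neg_div_rpow_neg {r p a : ℝ} (hr : 0 ≤ r) (hp : p ≠ 0) :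
    (r ^ (-(a / p))) ^ (-p) = r ^ a := by
  rw [← Real.rpow_mul hr, neg_mul_neg, div_mul_cancel₀ _ hp]

lemma ofReal_mul_rpow_one_div_le_iff {c p : ℝ} {I N : ℝ≥0∞} (hc : 0 < c) (hp : 0 < p) :
    ENNReal.ofReal c * I ^ (1 / p) ≤ N ↔ I ≤ N ^ p * ENNReal.ofReal (c ^ (-p)) := by
  rw [ENNReal.mul_le_iff_le_inv (ENNReal.ofReal_pos.2 hc).ne' ENNReal.ofReal_ne_top, one_div,
    ENNReal.rpow_inv_le_iff hp, mul_comm, ENNReal.mul_rpow_of_nonneg _ _ hp.le,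
    ENNReal.inv_rpow, ← ENNReal.rpow_neg, ENNReal.ofReal_rpow_of_pos hc]

section Morrey

variable {n : ℕ} {p q lam α r : ℝ} {f : Euc n → ℝ} {N : ℝ≥0∞}

lemma morreyNormC_le_iff (hp : 0 < p) :
    morreyNormC n p lam f ≤ N ↔ ∀ (x : Euc n) (r : ℝ), 0 < r →
      ∫⁻ y in ball x r, ENNReal.ofReal (|f y| ^ p) ≤ N ^ p * ENNReal.ofReal (r ^ lam) := by
  simp only [morreyNormC, iSup_le_iff]
  refine forall₃_congr fun x r hr => ?_
  rw [ofReal_mul_rpow_one_div_le_iff (by positivity) hp, rpow_neg_div_rpow_neg hr.le hp.ne']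

lemma weakMorreyNormC_le_iff (hp : 0 < p) :
    weakMorreyNormC n p lam f ≤ N ↔ ∀ (x : Euc n) (r : ℝ), 0 < r → ∀ t : ℝ, 0 < t →
      volume {y ∈ ball x r | t < |f y|} ≤
        N ^ p * ENNReal.ofReal (r ^ lam) * ENNReal.ofReal (t ^ (-p)) := by
  simp only [weakMorreyNormC, iSup_le_iff]
  refine forall₅_congr fun x r hr t ht => ?_
  rw [← ENNReal.ofReal_mul (by positivity), ofReal_mul_rpow_one_div_le_iff (by positivity) hp,
    Real.mul_rpow (by positivity) ht.le, rpow_neg_div_rpow_neg hr.le hp.ne',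
    ENNReal.ofReal_mul (by positivity), mul_assoc]

lemma setLIntegral_rpow_le_of_weakMorrey (hf : Measurable f) (hq : 0 < q) (hqp : q < p)
    (x : Euc n) (hr : 0 < r) :
    ∫⁻ y in ball x r, ENNReal.ofReal (|f y| ^ q) ≤
      (volume (ball (0 : Euc n) 1) +
          weakMorreyNormC n p lam f ^ p * ENNReal.ofReal (q / (p - q))) *
        ENNReal.ofReal (r ^ (n - (n - lam) * q / p)) := by
  have hp : 0 < p := hq.trans hqp
  set ω := volume (ball (0 : Euc n) 1)
  set K := weakMorreyNormC n p lam f ^ p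
  have volume_ball : volume (ball x r) = ω * ENNReal.ofReal (r ^ (n : ℝ)) := by
    rw [Measure.addHaar_ball_of_pos volume x hr, finrank_euclideanSpace_fin, mul_comm,
      Real.rpow_natCast]
  have distribution : ∀ t > r ^ ((lam - n) / p), volume.restrict (ball x r) {y | t < |f y|} ≤
      K * ENNReal.ofReal (r ^ lam) * ENNReal.ofReal (t ^ (-p)) := by
    intro t ht
    rw [Measure.restrict_apply' measurableSet_ball, inter_comm]
    exact (weakMorreyNormC_le_iff hp).1 le_rfl x r hr t ((by positivity : (0 : ℝ) < _).trans ht)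
  -- `r ^ ((lam - n) / p)` is the height at which both parts have the same order in `r`.
  have low_exponent : r ^ (n : ℝ) * (r ^ ((lam - n) / p)) ^ q = r ^ (n - (n - lam) * q / p) := by
    rw [← Real.rpow_mul hr.le, ← Real.rpow_add hr]
    ring_nf
  have high_exponent :
      r ^ lam * (r ^ ((lam - n) / p)) ^ (q - p) = r ^ (n - (n - lam) * q / p) := by
    rw [← Real.rpow_mul hr.le, ← Real.rpow_add hr]
    congr 1
    field_simp
    ring
  calc
    _ ≤ volume (ball x r) * ENNReal.ofReal ((r ^ ((lam - n) / p)) ^ q) +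
          K * ENNReal.ofReal (r ^ lam) *
            ENNReal.ofReal (q / (p - q) * (r ^ ((lam - n) / p)) ^ (q - p)) := by
      simpa only [Measure.restrict_apply_univ] using
        lintegral_rpow_le_of_meas_lt_le (Eventually.of_forall fun y => abs_nonneg (f y))
          (by fun_prop) hq hqp (by positivity) distribution
    _ = _ := by
      rw [volume_ball, mul_assoc, ← ENNReal.ofReal_mul (by positivity), low_exponent, mul_assoc K,
        ← ENNReal.ofReal_mul (by positivity), mul_left_comm (r ^ lam), high_exponent,
        ENNReal.ofReal_mul (div_pos hq (sub_pos.2 hqp)).le, ← mul_assoc, add_mul]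

lemma memLocLp_of_setLIntegral_ball_lt_top (hf : Measurable f)
    (h : ∀ x, ∫⁻ y in ball x 1, ENNReal.ofReal (|f y| ^ p) < ⊤) : MemLocLp n p f := by
  refine fun x => ⟨ball x 1, ball_mem_nhds x one_pos,
    (hf.abs.pow_const p).aestronglyMeasurable, ?_⟩
  rw [hasFiniteIntegral_iff_ofReal (Eventually.of_forall fun y => by positivity)]
  exact h x

theorem MemWeakMorreyC.memMorreyC (hf : MemWeakMorreyC n p lam f) (hq : 0 < q) (hqp : q < p) :
    MemMorreyC n q (n - (n - lam) * q / p) f := by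
  obtain ⟨hmeas, hnorm⟩ := hf
  set C := volume (ball (0 : Euc n) 1) +
    weakMorreyNormC n p lam f ^ p * ENNReal.ofReal (q / (p - q))
  have hC : C < ⊤ := ENNReal.add_lt_top.2 ⟨measure_ball_lt_top,
    ENNReal.mul_lt_top (ENNReal.rpow_lt_top_of_nonneg (hq.trans hqp).le hnorm.ne)
      ENNReal.ofReal_lt_top⟩
  have hball := fun (x : Euc n) (r : ℝ) (hr : 0 < r) =>
    setLIntegral_rpow_le_of_weakMorrey (lam := lam) hmeas hq hqp x hr
  have hle : morreyNormC n q (n - (n - lam) * q / p) f ≤ C ^ q⁻¹ := by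
    rwa [morreyNormC_le_iff hq, ENNReal.rpow_inv_rpow hq.ne']
  exact ⟨memLocLp_of_setLIntegral_ball_lt_top hmeas fun x =>
      (hball x 1 one_pos).trans_lt (ENNReal.mul_lt_top hC ENNReal.ofReal_lt_top),
    hle.trans_lt (ENNReal.rpow_lt_top_of_nonneg (inv_nonneg.2 hq.le) hC.ne)⟩

lemma stummelModA_le_morreyNormC_mul (hf : MemLocLp n p f) (hp : 0 < p) (hα : α < n)
    (hlam : n - α < lam) (hr : 0 < r) :
    stummelModA n p α f r ≤ morreyNormC n p lam f *
      ENNReal.ofReal (lam / (lam - (n - α)) * r ^ (lam - (n - α))) ^ (1 / p) := by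
  have hdens : AEMeasurable (fun y => ENNReal.ofReal (|f y| ^ p)) :=
    hf.aestronglyMeasurable.aemeasurable.ennreal_ofReal
  set ν : Measure (Euc n) := volume.withDensity fun y => ENNReal.ofReal (|f y| ^ p)
  refine iSup_le fun x => ?_
  have hν : ∀ ρ, 0 < ρ → ρ ≤ r →
      ν (ball x ρ) ≤ morreyNormC n p lam f ^ p * ENNReal.ofReal (ρ ^ lam) := by
    intro ρ hρ _
    rw [withDensity_apply _ measurableSet_ball]
    exact (morreyNormC_le_iff hp).1 le_rfl x ρ hρ
  have hweight : Measurable fun y : Euc n => ENNReal.ofReal ((dist x y)⁻¹ ^ (n - α)) := by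
    fun_prop
  calc
    _ = (∫⁻ y in ball x r, ENNReal.ofReal ((dist x y)⁻¹ ^ (n - α)) ∂ν) ^ (1 / p) := by
      rw [setLIntegral_withDensity_eq_lintegral_mul₀ hdens hweight.aemeasurable measurableSet_ball]
      congr! 3 with y
      rw [Pi.mul_apply, ← ENNReal.ofReal_mul (by positivity), Real.inv_rpow dist_nonneg,
        div_eq_mul_inv]
    _ ≤ (morreyNormC n p lam f ^ p *
          ENNReal.ofReal (lam / (lam - (n - α)) * r ^ (lam - (n - α)))) ^ (1 / p) := by
      gcongr
      exact setLIntegral_ball_inv_dist_rpow_le hr (sub_pos.2 hα) hlam hν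
    _ = _ := by
      rw [ENNReal.mul_rpow_of_nonneg _ _ (by positivity), one_div, ENNReal.rpow_rpow_inv hp.ne']

theorem MemMorreyC.memStummelA (hf : MemMorreyC n p lam f) (hp : 0 < p) (hα : α < n)
    (hlam : n - α < lam) : MemStummelA n p α f := by
  obtain ⟨hloc, hnorm⟩ := hf
  set δ := lam - (n - α)
  have hδ : 0 < δ := sub_pos.2 hlam
  let bound : ℝ → ℝ≥0∞ := fun r =>
    morreyNormC n p lam f * ENNReal.ofReal (lam / δ * r ^ δ) ^ (1 / p)
  have hle : ∀ r > 0, stummelModA n p α f r ≤ bound r := fun r hr =>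
    stummelModA_le_morreyNormC_mul hloc hp hα hlam hr
  have hbound : Continuous bound := by
    refine (ENNReal.continuous_const_mul hnorm.ne).comp (ENNReal.continuous_rpow_const.comp
      (ENNReal.continuous_ofReal.comp (continuous_const.mul ?_)))
    exact Real.continuous_rpow_const hδ.le
  have hbound_zero : bound 0 = 0 := by
    simp [bound, Real.zero_rpow hδ.ne', hp]
  refine ⟨hloc, fun r hr => (hle r hr).trans_lt ?_, ?_⟩
  · exact ENNReal.mul_lt_top hnorm
      (ENNReal.rpow_lt_top_of_nonneg (by positivity) ENNReal.ofReal_ne_top)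
  · refine tendsto_of_tendsto_of_tendsto_of_le_of_le' tendsto_const_nhds
      ((hbound.tendsto' 0 0 hbound_zero).mono_left nhdsWithin_le_nhds)
      (Eventually.of_forall fun r => zero_le) ?_
    filter_upwards [self_mem_nhdsWithin] with r hr using hle r hr

end Morrey

theorem weak_morrey_subset_stummel_classical_general {n : ℕ} {p₁ p₂ lam α : ℝ} (hp₂ : 0 < p₂)
    (hp : p₂ < p₁) (hα₁ : ((n : ℝ) - lam) * p₂ / p₁ < α) (hα₂ : α < n) {f : Euc n → ℝ}
    (hf : MemWeakMorreyC n p₁ lam f) : MemStummelA n p₂ α f :=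
  (hf.memMorreyC hp₂ hp).memStummelA hp₂ hα₂ (by linarith)

/-- For `1 ≤ p₂ < p₁ < ∞`, `0 ≤ λ < n` and `(n−λ)p₂/p₁ < α < n`,
`wL^{p₁,λ}(ℝ^n) ⊆ S_{p₂,α}(ℝ^n)`. -/
theorem weak_morrey_subset_stummel_classical (n : ℕ) (hn : 1 ≤ n) (p₁ p₂ lam α : ℝ)
    (hp₂ : 1 ≤ p₂) (hp : p₂ < p₁) (hlam₀ : 0 ≤ lam) (hlam₁ : lam < n)
    (hα₁ : ((n : ℝ) - lam) * p₂ / p₁ < α) (hα₂ : α < n) :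
    ∀ f : Euc n → ℝ, MemWeakMorreyC n p₁ lam f → MemStummelA n p₂ α f := by
  intro f hf
  exact weak_morrey_subset_stummel_classical_general (zero_lt_one.trans_le hp₂) hp hα₁ hα₂ hf
end
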